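/- Let 1 < s < 2 and let h : [0,1] → ℝ be continuously differentiable. Set c = (1/Γ(s)) ∫₀¹ (1−t)^{s−1} h(t) dt and define u : [0,1] → ℝ by u(x) = c x − (1/Γ(s)) ∫₀ˣ (x−t)^{s−1} h(t) dt. Then u(0) = u(1) = 0, u is twice differentiable on (0,1), its second derivative u″ is integrable against the kernel (x−t)^{1−s}, and for every x ∈ (0,1), (1/Γ(2−s)) ∫₀ˣ (x−t)^{1−s} u″(t) dt = −h(x); that is, the Caputo derivative of order s of u satisfies (₀ᶜDₓˢ u)(x) = −h(x) on (0,1). (With h = g(·,u(·)) − f, this is the solution representation u(x) = x (₀Iₓˢ(g(·,u)−f))(1) − (₀Iₓˢ(g(·,u)−f))(x) for the Caputo two-point boundary value problem −₀ᶜDₓˢ u + g(x,u) = f, u(0) = u(1) = 0.) -/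

import Mathlib

/-!
For `α > 0`, the fractional integral `I^α` based at `a` is convolution with the kernel
`k_α(t) = t₊^(α - 1) / Γ(α)`, and the Beta integral says `k_α ⋆ k_β = k_(α + β)`. Hence
`I^α I^β = I^(α + β)` by Fubini and, since `I¹` is integration, `(I^(α + 1) f)' = I^α f`.
In particular `u'` is a constant minus `I^(s - 1) h`.

A `C¹` function is `h = I¹(dh)`, where `dh = h(a) δ_a + h' dt` carries an atom at `a`. So
`I^(s - 1) h = I^s(dh)` has derivative `I^(s - 1)(dh)`, which is singular at `a` but integrable
there because `s > 1`, and `I^(2 - s) I^(s - 1)(dh) = I¹(dh) = h`.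
-/

open MeasureTheory Set Filter

/-- The Riemann–Liouville kernel `k_α(t) = t₊^(α - 1) / Γ(α)`. It vanishes for `t ≤ 0`, also when
`α ≤ 1`, so that the fractional integral of order `α` is convolution with it. -/
noncomputable def rlKernel (α : ℝ) : ℝ → ℝ :=
  (Ioi 0).indicator fun t => t ^ (α - 1) / Real.Gamma α

section Kernel

variable {α β r t x : ℝ}

lemma rlKernel_of_pos (ht : 0 < t) : rlKernel α t = t ^ (α - 1) / Real.Gamma α :=
  indicator_of_mem ht _

lemma rlKernel_of_nonpos (ht : t ≤ 0) : rlKernel α t = 0 :=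
  indicator_of_notMem ht.not_gt _

lemma rlKernel_pos (hα : 0 < α) (ht : 0 < t) : 0 < rlKernel α t := by
  rw [rlKernel_of_pos ht]
  exact div_pos (Real.rpow_pos_of_pos ht _) (Real.Gamma_pos_of_pos hα)

lemma rlKernel_nonneg (hα : 0 < α) (t : ℝ) : 0 ≤ rlKernel α t := by
  rcases le_or_gt t 0 with ht | ht
  · exact (rlKernel_of_nonpos ht).ge
  · exact (rlKernel_pos hα ht).le

@[fun_prop]
lemma measurable_rlKernel (α : ℝ) : Measurable (rlKernel α) :=
  Measurable.indicator (by fun_prop) measurableSet_Ioi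

lemma hasDerivAt_rlKernel_add_one (hα : 0 < α) (ht : 0 < t) :
    HasDerivAt (rlKernel (α + 1)) (rlKernel α t) t := by
  have hpow : HasDerivAt (fun y : ℝ => y ^ α / (α * Real.Gamma α))
      (α * t ^ (α - 1) / (α * Real.Gamma α)) t :=
    (Real.hasDerivAt_rpow_const (Or.inl ht.ne')).div_const _
  rw [mul_div_mul_left _ _ hα.ne', ← rlKernel_of_pos ht] at hpow
  refine hpow.congr_of_eventuallyEq ?_
  filter_upwards [Ioi_mem_nhds ht] with y hy
  rw [rlKernel_of_pos hy, Real.Gamma_add_one hα.ne', add_sub_cancel_right]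

lemma integral_rpow_sub_mul_rpow_sub (hα : 0 < α) (hβ : 0 < β) (hrx : r < x) :
    ∫ t in r..x, (x - t) ^ (α - 1) * (t - r) ^ (β - 1) =
      (x - r) ^ (α + β - 1) * ProbabilityTheory.beta α β := by
  have hlen : 0 < x - r := sub_pos.2 hrx
  have hshift : ∫ t in r..x, (x - t) ^ (α - 1) * (t - r) ^ (β - 1) =
      ∫ t in 0..x - r, t ^ (β - 1) * (x - r - t) ^ (α - 1) := by
    simpa [mul_comm] using intervalIntegral.integral_comp_sub_right (a := r) (b := x)
      (fun t => t ^ (β - 1) * (x - r - t) ^ (α - 1)) r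
  have hcomplex := Complex.betaIntegral_scaled (β : ℂ) (α : ℂ) hlen
  rw [Complex.betaIntegral_eq_Gamma_mul_div _ _ (by simpa) (by simpa)] at hcomplex
  rw [hshift]
  apply Complex.ofReal_injective
  rw [← intervalIntegral.integral_ofReal]
  calc ∫ t in 0..x - r, ((t ^ (β - 1) * (x - r - t) ^ (α - 1) : ℝ) : ℂ)
      = ∫ t in 0..x - r, (t : ℂ) ^ ((β : ℂ) - 1) * (((x - r : ℝ) : ℂ) - t) ^ ((α : ℂ) - 1) := by
        refine intervalIntegral.integral_congr fun t ht => ?_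
        rw [uIcc_of_le hlen.le] at ht
        rw [Complex.ofReal_mul, Complex.ofReal_cpow ht.1, Complex.ofReal_cpow (sub_nonneg.2 ht.2)]
        push_cast
        rfl
    _ = _ := hcomplex
    _ = _ := by
        rw [ProbabilityTheory.beta, Complex.ofReal_mul, Complex.ofReal_cpow hlen.le]
        simp only [← Complex.ofReal_add, Complex.Gamma_ofReal]
        push_cast
        rw [add_comm (β : ℂ), mul_comm (Real.Gamma β : ℂ), add_comm β]

lemma rlKernel_mul_rlKernel_eq_zero (ht : t ∉ Ioo r x) :
    rlKernel α (x - t) * rlKernel β (t - r) = 0 := by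
  rcases le_or_gt t r with htr | hrt
  · rw [rlKernel_of_nonpos (sub_nonpos.2 htr), mul_zero]
  · have hxt : x ≤ t := not_lt.1 fun htx => ht ⟨hrt, htx⟩
    rw [rlKernel_of_nonpos (sub_nonpos.2 hxt), zero_mul]

lemma integral_rlKernel_mul_rlKernel (hα : 0 < α) (hβ : 0 < β) (x r : ℝ) :
    ∫ t, rlKernel α (x - t) * rlKernel β (t - r) = rlKernel (α + β) (x - r) := by
  rw [← setIntegral_eq_integral_of_forall_compl_eq_zero
    fun t ht => rlKernel_mul_rlKernel_eq_zero (r := r) (x := x) ht]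
  rcases le_or_gt x r with hxr | hrx
  · rw [Ioo_eq_empty hxr.not_gt, setIntegral_empty, rlKernel_of_nonpos (sub_nonpos.2 hxr)]
  have hΓα := (Real.Gamma_pos_of_pos hα).ne'
  have hΓβ := (Real.Gamma_pos_of_pos hβ).ne'
  calc ∫ t in Ioo r x, rlKernel α (x - t) * rlKernel β (t - r)
      = ∫ t in Ioo r x, (x - t) ^ (α - 1) * (t - r) ^ (β - 1) / (Real.Gamma α * Real.Gamma β) := by
        refine setIntegral_congr_fun measurableSet_Ioo fun t ht => ?_
        rw [rlKernel_of_pos (sub_pos.2 ht.2), rlKernel_of_pos (sub_pos.2 ht.1), div_mul_div_comm]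
    _ = (x - r) ^ (α + β - 1) * ProbabilityTheory.beta α β / (Real.Gamma α * Real.Gamma β) := by
        rw [integral_div, ← integral_Ioc_eq_integral_Ioo,
          ← intervalIntegral.integral_of_le hrx.le, integral_rpow_sub_mul_rpow_sub hα hβ hrx]
    _ = rlKernel (α + β) (x - r) := by
        rw [rlKernel_of_pos (sub_pos.2 hrx), ProbabilityTheory.beta]
        field_simp

lemma integrable_rlKernel_mul_rlKernel (hα : 0 < α) (hβ : 0 < β) (x r : ℝ) :
    Integrable fun t => rlKernel α (x - t) * rlKernel β (t - r) := by
  rcases le_or_gt x r with hxr | hrx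
  · refine (integrable_zero ℝ ℝ volume).congr (Eventually.of_forall fun t => ?_)
    exact (rlKernel_mul_rlKernel_eq_zero (by simp [Ioo_eq_empty hxr.not_gt])).symm
  · refine Integrable.of_integral_ne_zero ?_
    rw [integral_rlKernel_mul_rlKernel hα hβ]
    exact (rlKernel_pos (add_pos hα hβ) (sub_pos.2 hrx)).ne'

end Kernel

variable {E : Type*} [NormedAddCommGroup E] [NormedSpace ℝ E]

/-- The left Riemann–Liouville fractional integral `ₐIₓ^α f` of order `α` with base point `a`;
meaningful for `α > 0` and `a ≤ x`. -/
noncomputable def rlIntegral (a α : ℝ) (f : ℝ → E) (x : ℝ) : E :=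
  (Real.Gamma α)⁻¹ • ∫ t in a..x, (x - t) ^ (α - 1) • f t

section Semigroup

variable {a b x α β : ℝ} {f g : ℝ → E}

lemma rlIntegral_self (a α : ℝ) (f : ℝ → E) : rlIntegral a α f a = 0 := by
  simp [rlIntegral]

lemma rlIntegral_one (a : ℝ) (f : ℝ → E) (x : ℝ) : rlIntegral a 1 f x = ∫ t in a..x, f t := by
  simp [rlIntegral]

lemma rlKernel_sub_smul_of_lt {t : ℝ} (htx : t < x) (v : E) :
    rlKernel α (x - t) • v = (Real.Gamma α)⁻¹ • (x - t) ^ (α - 1) • v := by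
  rw [rlKernel_of_pos (sub_pos.2 htx), smul_smul, div_eq_inv_mul]

lemma rlIntegral_eq_setIntegral_rlKernel (α : ℝ) (f : ℝ → E) (hx : x ∈ Icc a b) :
    rlIntegral a α f x = ∫ t in Ioo a b, rlKernel α (x - t) • f t := by
  have hcut : ∀ t, rlKernel α (x - t) • f t =
      (Iio x).indicator (fun t => (Real.Gamma α)⁻¹ • (x - t) ^ (α - 1) • f t) t := fun t => by
    rcases lt_or_ge t x with ht | ht
    · rw [indicator_of_mem (mem_Iio.2 ht), rlKernel_sub_smul_of_lt ht]
    · rw [indicator_of_notMem (notMem_Iio.2 ht), rlKernel_of_nonpos (sub_nonpos.2 ht), zero_smul]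
  simp only [hcut]
  rw [setIntegral_indicator measurableSet_Iio, Ioo_inter_Iio, min_eq_right hx.2, integral_smul,
    ← integral_Ioc_eq_integral_Ioo, ← intervalIntegral.integral_of_le hx.1, rlIntegral]

lemma intervalIntegrable_rpow_sub_smul_iff (hα : 0 < α) (hax : a ≤ x) :
    IntervalIntegrable (fun t => (x - t) ^ (α - 1) • f t) volume a x ↔
      IntegrableOn (fun t => rlKernel α (x - t) • f t) (Ioo a x) := by
  have hscale : EqOn (fun t => rlKernel α (x - t) • f t)
      (fun t => (Real.Gamma α)⁻¹ • (x - t) ^ (α - 1) • f t) (Ioo a x) := fun t ht =>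
    rlKernel_sub_smul_of_lt ht.2 _
  rw [intervalIntegrable_iff_integrableOn_Ioo_of_le hax,
    integrableOn_congr_fun hscale measurableSet_Ioo]
  exact (integrable_smul_iff (inv_ne_zero (Real.Gamma_pos_of_pos hα).ne') _).symm

lemma rlIntegral_congr (hax : a ≤ x) (hfg : EqOn f g (Ioo a x)) :
    rlIntegral a α f x = rlIntegral a α g x := by
  simp only [rlIntegral_eq_setIntegral_rlKernel α _ (right_mem_Icc.2 hax)]
  exact setIntegral_congr_fun measurableSet_Ioo fun t ht => by simp only [hfg ht]

lemma rlIntegral_neg (a α : ℝ) (f : ℝ → E) (x : ℝ) :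
    rlIntegral a α (fun t => -f t) x = -rlIntegral a α f x := by
  simp only [rlIntegral, smul_neg, intervalIntegral.integral_neg]

lemma rlIntegral_add (hf : IntervalIntegrable (fun t => (x - t) ^ (α - 1) • f t) volume a x)
    (hg : IntervalIntegrable (fun t => (x - t) ^ (α - 1) • g t) volume a x) :
    rlIntegral a α (fun t => f t + g t) x = rlIntegral a α f x + rlIntegral a α g x := by
  simp only [rlIntegral, smul_add]
  rw [intervalIntegral.integral_add hf hg, smul_add]

lemma aestronglyMeasurable_of_integrableOn_rlKernel_smul (hα : 0 < α)
    (hf : IntegrableOn (fun t => rlKernel α (x - t) • f t) (Ioo a x)) :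
    AEStronglyMeasurable f (volume.restrict (Ioo a x)) := by
  have hinv : Measurable fun t => (rlKernel α (x - t))⁻¹ := by fun_prop
  refine (hinv.aestronglyMeasurable.smul hf.aestronglyMeasurable).congr ?_
  filter_upwards [ae_restrict_mem measurableSet_Ioo] with t ht
  exact inv_smul_smul₀ (rlKernel_pos hα (sub_pos.2 ht.2)).ne' _

lemma integrable_prod_rlKernel_mul_rlKernel_smul (hα : 0 < α) (hβ : 0 < β)
    (hf : IntegrableOn (fun r => rlKernel (α + β) (x - r) • f r) (Ioo a x)) :
    Integrable (Function.uncurry fun t r => (rlKernel α (x - t) * rlKernel β (t - r)) • f r)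
      (volume.prod (volume.restrict (Ioo a x))) := by
  have hmeas : AEStronglyMeasurable
      (Function.uncurry fun t r => (rlKernel α (x - t) * rlKernel β (t - r)) • f r)
      (volume.prod (volume.restrict (Ioo a x))) := by
    have hker : Measurable fun p : ℝ × ℝ => rlKernel α (x - p.1) * rlKernel β (p.1 - p.2) := by
      fun_prop
    exact hker.aestronglyMeasurable.smul
      (aestronglyMeasurable_of_integrableOn_rlKernel_smul (add_pos hα hβ) hf).comp_snd
  rw [integrable_prod_iff' hmeas]
  refine ⟨Eventually.of_forall fun r =>
    (integrable_rlKernel_mul_rlKernel hα hβ x r).smul_const (f r), ?_⟩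
  refine hf.norm.congr (Eventually.of_forall fun r => ?_)
  simp only [Function.uncurry, norm_smul]
  rw [integral_mul_const, ← integral_rlKernel_mul_rlKernel hα hβ,
    Real.norm_of_nonneg (integral_nonneg fun t =>
      mul_nonneg (rlKernel_nonneg hα _) (rlKernel_nonneg hβ _))]
  simp only [Real.norm_of_nonneg (mul_nonneg (rlKernel_nonneg hα _) (rlKernel_nonneg hβ _))]

lemma setIntegral_rlKernel_mul_rlKernel_smul (α β : ℝ) (f : ℝ → E) {t : ℝ} (ht : t ∈ Icc a x) :
    ∫ r in Ioo a x, (rlKernel α (x - t) * rlKernel β (t - r)) • f r =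
      rlKernel α (x - t) • rlIntegral a β f t := by
  simp only [mul_smul]
  rw [integral_smul, ← rlIntegral_eq_setIntegral_rlKernel β f ht]

lemma rlIntegral_rlIntegral [CompleteSpace E] (hα : 0 < α) (hβ : 0 < β) (hax : a ≤ x)
    (hf : IntervalIntegrable (fun t => (x - t) ^ (α + β - 1) • f t) volume a x) :
    rlIntegral a α (rlIntegral a β f) x = rlIntegral a (α + β) f x := by
  have hx : x ∈ Icc a x := right_mem_Icc.2 hax
  have hprod := integrable_prod_rlKernel_mul_rlKernel_smul hα hβ
    ((intervalIntegrable_rpow_sub_smul_iff (add_pos hα hβ) hax).1 hf)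
  have hsupp : ∀ t ∉ Ioo a x,
      ∫ r in Ioo a x, (rlKernel α (x - t) * rlKernel β (t - r)) • f r = 0 := fun t ht => by
    refine setIntegral_eq_zero_of_forall_eq_zero fun r hr => ?_
    rw [rlKernel_mul_rlKernel_eq_zero fun htr => ht ⟨hr.1.trans htr.1, htr.2⟩, zero_smul]
  calc rlIntegral a α (rlIntegral a β f) x
      = ∫ t in Ioo a x, ∫ r in Ioo a x, (rlKernel α (x - t) * rlKernel β (t - r)) • f r := by
        rw [rlIntegral_eq_setIntegral_rlKernel α _ hx]
        refine setIntegral_congr_fun measurableSet_Ioo fun t ht => ?_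
        exact (setIntegral_rlKernel_mul_rlKernel_smul α β f (Ioo_subset_Icc_self ht)).symm
    _ = ∫ t, ∫ r in Ioo a x, (rlKernel α (x - t) * rlKernel β (t - r)) • f r :=
        setIntegral_eq_integral_of_forall_compl_eq_zero hsupp
    _ = ∫ r in Ioo a x, ∫ t, (rlKernel α (x - t) * rlKernel β (t - r)) • f r :=
        integral_integral_swap hprod
    _ = rlIntegral a (α + β) f x := by
        simp only [integral_smul_const, integral_rlKernel_mul_rlKernel hα hβ]
        exact (rlIntegral_eq_setIntegral_rlKernel (α + β) f hx).symm

lemma intervalIntegrable_rpow_sub_smul_rlIntegral (hα : 0 < α) (hβ : 0 < β) (hax : a ≤ x)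
    (hf : IntervalIntegrable (fun t => (x - t) ^ (α + β - 1) • f t) volume a x) :
    IntervalIntegrable (fun t => (x - t) ^ (α - 1) • rlIntegral a β f t) volume a x := by
  have hprod := integrable_prod_rlKernel_mul_rlKernel_smul hα hβ
    ((intervalIntegrable_rpow_sub_smul_iff (add_pos hα hβ) hax).1 hf)
  rw [intervalIntegrable_rpow_sub_smul_iff hα hax]
  refine hprod.integral_prod_left.integrableOn.congr_fun (fun t ht => ?_) measurableSet_Ioo
  exact setIntegral_rlKernel_mul_rlKernel_smul α β f (Ioo_subset_Icc_self ht)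

end Semigroup

section Continuous

variable {a b x α : ℝ} {f : ℝ → E}

lemma intervalIntegrable_rpow_sub_smul_of_continuousOn (hα : 0 < α) (hax : a ≤ x)
    (hf : ContinuousOn f (Icc a x)) :
    IntervalIntegrable (fun t => (x - t) ^ (α - 1) • f t) volume a x := by
  have hpow : IntervalIntegrable (fun t => (x - t) ^ (α - 1)) volume a x := by
    simpa using (intervalIntegral.intervalIntegrable_rpow' (a := x - a) (b := 0)
      (by linarith : -1 < α - 1)).comp_sub_left x
  exact hpow.smul_continuousOn (by rwa [uIcc_of_le hax])

lemma rlIntegral_eq_rpow_smul_integral_zero_one (hα : 0 < α) (f : ℝ → E) (hax : a ≤ x) :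
    rlIntegral a α f x = ((x - a) ^ α / Real.Gamma α) •
      ∫ τ in (0 : ℝ)..1, (1 - τ) ^ (α - 1) • f (a + (x - a) * τ) := by
  rcases hax.eq_or_lt with rfl | hlt
  · simp [rlIntegral_self, Real.zero_rpow hα.ne']
  have hlen : 0 < x - a := sub_pos.2 hlt
  have hscale : ∫ t in a..x, (x - t) ^ (α - 1) • f t = (x - a) •
      ∫ τ in (0 : ℝ)..1, (x - (a + (x - a) * τ)) ^ (α - 1) • f (a + (x - a) * τ) := by
    simpa using (intervalIntegral.smul_integral_comp_add_mul (a := 0) (b := 1)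
      (fun t => (x - t) ^ (α - 1) • f t) (x - a) a).symm
  have hfactor : ∀ τ ∈ uIcc (0 : ℝ) 1,
      (x - (a + (x - a) * τ)) ^ (α - 1) • f (a + (x - a) * τ) =
        (x - a) ^ (α - 1) • (1 - τ) ^ (α - 1) • f (a + (x - a) * τ) := fun τ hτ => by
    rw [uIcc_of_le zero_le_one] at hτ
    rw [smul_smul, ← Real.mul_rpow hlen.le (sub_nonneg.2 hτ.2)]
    ring_nf
  rw [rlIntegral, hscale, intervalIntegral.integral_congr hfactor, intervalIntegral.integral_smul,
    smul_smul, smul_smul, Real.rpow_sub_one hlen.ne']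
  congr 1
  field_simp

lemma continuousOn_rlIntegral (hα : 0 < α) (hf : ContinuousOn f (Icc a b)) :
    ContinuousOn (rlIntegral a α f) (Icc a b) := by
  obtain ⟨M, hM⟩ := isCompact_Icc.exists_bound_of_continuousOn hf
  have hmem : ∀ y ∈ Icc a b, ∀ τ ∈ Icc (0 : ℝ) 1, a + (y - a) * τ ∈ Icc a b :=
    fun y hy τ hτ => ⟨by nlinarith [hy.1, hτ.1], by nlinarith [hy.1, hy.2, hτ.2]⟩
  have hpow : IntervalIntegrable (fun τ : ℝ => (1 - τ) ^ (α - 1)) volume 0 1 := by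
    simpa using intervalIntegrable_rpow_sub_smul_of_continuousOn hα zero_le_one
      (continuousOn_const (c := (1 : ℝ)))
  refine ContinuousOn.congr (ContinuousOn.smul ?_ fun x hx => ?_)
    fun y hy => rlIntegral_eq_rpow_smul_integral_zero_one hα f hy.1
  · exact ((continuousOn_id.sub continuousOn_const).rpow_const fun _ _ => Or.inr hα.le).div_const _
  refine intervalIntegral.continuousWithinAt_of_dominated_interval
    (bound := fun τ => (1 - τ) ^ (α - 1) * M) ?_ ?_ (hpow.mul_const M) ?_
  · filter_upwards [self_mem_nhdsWithin] with y hy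
    exact (intervalIntegrable_rpow_sub_smul_of_continuousOn hα zero_le_one
      (hf.comp (by fun_prop) (hmem y hy))).def'.aestronglyMeasurable
  · filter_upwards [self_mem_nhdsWithin] with y hy
    refine Eventually.of_forall fun τ hτ => ?_
    rw [uIoc_of_le zero_le_one] at hτ
    have hker : 0 ≤ (1 - τ) ^ (α - 1) := Real.rpow_nonneg (sub_nonneg.2 hτ.2) _
    rw [norm_smul, Real.norm_of_nonneg hker]
    exact mul_le_mul_of_nonneg_left (hM _ (hmem y hy τ (Ioc_subset_Icc_self hτ))) hker
  · refine Eventually.of_forall fun τ hτ => ?_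
    rw [uIoc_of_le zero_le_one] at hτ
    have hcomp : ContinuousOn (fun y => f (a + (y - a) * τ)) (Icc a b) :=
      hf.comp (by fun_prop) fun y hy => hmem y hy τ (Ioc_subset_Icc_self hτ)
    exact (hcomp x hx).const_smul _

lemma rlIntegral_add_one_eq_integral [CompleteSpace E] (hα : 0 < α) (hax : a ≤ x)
    (hf : ContinuousOn f (Icc a x)) :
    rlIntegral a (α + 1) f x = ∫ t in a..x, rlIntegral a α f t := by
  rw [← rlIntegral_one, rlIntegral_rlIntegral one_pos hα hax
    (intervalIntegrable_rpow_sub_smul_of_continuousOn (by positivity) hax hf), add_comm]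

lemma hasDerivAt_rlIntegral_add_one [CompleteSpace E] (hα : 0 < α)
    (hf : ContinuousOn f (Icc a b)) (hx : x ∈ Ioo a b) :
    HasDerivAt (rlIntegral a (α + 1) f) (rlIntegral a α f x) x := by
  have hcont := continuousOn_rlIntegral hα hf
  have hint : IntervalIntegrable (rlIntegral a α f) volume a x :=
    (hcont.mono (Icc_subset_Icc_right hx.2.le)).intervalIntegrable_of_Icc hx.1.le
  refine (intervalIntegral.integral_hasDerivAt_right hint
    ((hcont.mono Ioo_subset_Icc_self).stronglyMeasurableAtFilter isOpen_Ioo x hx)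
    (hcont.continuousAt (Icc_mem_nhds hx.1 hx.2))).congr_of_eventuallyEq ?_
  filter_upwards [Ioo_mem_nhds hx.1 hx.2] with y hy
  exact rlIntegral_add_one_eq_integral hα hy.1.le (hf.mono (Icc_subset_Icc_right hy.2.le))

end Continuous

/-- The fractional integral of order `α` of the vector measure `v δ_a + g dt`: an atom of mass `v`
at the base point contributes `k_α(x - a) • v`. With `v = h a` and `g = h'` this measure is the
distributional derivative of the extension of `h` by `0` to the left of `a`. -/
noncomputable def rlIntegralAtom (a α : ℝ) (v : E) (g : ℝ → E) (x : ℝ) : E :=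
  rlKernel α (x - a) • v + rlIntegral a α g x

section Atom

variable {a b x α β : ℝ} {v : E} {g : ℝ → E}

lemma rlIntegral_rlKernel_smul [CompleteSpace E] (hα : 0 < α) (hβ : 0 < β) (hax : a ≤ x) (v : E) :
    rlIntegral a α (fun t => rlKernel β (t - a) • v) x = rlKernel (α + β) (x - a) • v := by
  rw [rlIntegral_eq_setIntegral_rlKernel α _ (right_mem_Icc.2 hax)]
  simp only [smul_smul]
  rw [integral_smul_const, setIntegral_eq_integral_of_forall_compl_eq_zero
    fun t ht => rlKernel_mul_rlKernel_eq_zero ht, integral_rlKernel_mul_rlKernel hα hβ]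

lemma intervalIntegrable_rpow_sub_smul_rlKernel_smul (hα : 0 < α) (hβ : 0 < β) (hax : a ≤ x)
    (v : E) :
    IntervalIntegrable (fun t => (x - t) ^ (α - 1) • rlKernel β (t - a) • v) volume a x := by
  rw [intervalIntegrable_rpow_sub_smul_iff hα hax]
  simp only [smul_smul]
  exact ((integrable_rlKernel_mul_rlKernel hα hβ x a).smul_const v).integrableOn

lemma intervalIntegrable_rpow_sub_smul_rlIntegralAtom (hα : 0 < α) (hβ : 0 < β) (hax : a ≤ x)
    (hg : IntervalIntegrable (fun t => (x - t) ^ (α + β - 1) • g t) volume a x) :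
    IntervalIntegrable (fun t => (x - t) ^ (α - 1) • rlIntegralAtom a β v g t) volume a x := by
  simp only [rlIntegralAtom, smul_add]
  exact (intervalIntegrable_rpow_sub_smul_rlKernel_smul hα hβ hax v).add
    (intervalIntegrable_rpow_sub_smul_rlIntegral hα hβ hax hg)

lemma rlIntegral_rlIntegralAtom [CompleteSpace E] (hα : 0 < α) (hβ : 0 < β) (hax : a ≤ x)
    (hg : IntervalIntegrable (fun t => (x - t) ^ (α + β - 1) • g t) volume a x) :
    rlIntegral a α (rlIntegralAtom a β v g) x = rlIntegralAtom a (α + β) v g x := by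
  calc rlIntegral a α (rlIntegralAtom a β v g) x
      = rlIntegral a α (fun t => rlKernel β (t - a) • v) x +
          rlIntegral a α (rlIntegral a β g) x :=
        rlIntegral_add (intervalIntegrable_rpow_sub_smul_rlKernel_smul hα hβ hax v)
          (intervalIntegrable_rpow_sub_smul_rlIntegral hα hβ hax hg)
    _ = rlIntegralAtom a (α + β) v g x := by
        rw [rlIntegral_rlKernel_smul hα hβ hax, rlIntegral_rlIntegral hα hβ hax hg, rlIntegralAtom]

lemma hasDerivAt_rlIntegralAtom_add_one [CompleteSpace E] (hα : 0 < α)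
    (hg : ContinuousOn g (Icc a b)) (hx : x ∈ Ioo a b) :
    HasDerivAt (rlIntegralAtom a (α + 1) v g) (rlIntegralAtom a α v g x) x := by
  have hker : HasDerivAt (fun y => rlKernel (α + 1) (y - a)) (rlKernel α (x - a)) x :=
    (hasDerivAt_rlKernel_add_one hα (sub_pos.2 hx.1)).comp_sub_const x a
  exact (hker.smul_const v).add (hasDerivAt_rlIntegral_add_one hα hg hx)

end Atom

section ContDiff

variable {a b x α β : ℝ} {h : ℝ → E}

lemma intervalIntegrable_rpow_sub_smul_derivWithin (hα : 0 < α) (hh : ContDiffOn ℝ 1 h (Icc a b))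
    (hx : x ∈ Ioc a b) :
    IntervalIntegrable (fun t => (x - t) ^ (α - 1) • derivWithin h (Icc a b) t) volume a x :=
  intervalIntegrable_rpow_sub_smul_of_continuousOn hα hx.1.le
    ((hh.continuousOn_derivWithin (uniqueDiffOn_Icc (hx.1.trans_le hx.2)) le_rfl).mono
      (Icc_subset_Icc_right hx.2))

variable [CompleteSpace E]

lemma rlIntegralAtom_one_derivWithin (hh : ContDiffOn ℝ 1 h (Icc a b)) (hx : x ∈ Ioc a b) :
    rlIntegralAtom a 1 (h a) (derivWithin h (Icc a b)) x = h x := by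
  have hsub : Icc a x ⊆ Icc a b := Icc_subset_Icc_right hx.2
  have hderiv : ∀ t ∈ Ioo a x, HasDerivAt h (derivWithin h (Icc a b) t) t := fun t ht =>
    (hh.differentiableOn one_ne_zero t (hsub (Ioo_subset_Icc_self ht))).hasDerivWithinAt.hasDerivAt
      (Icc_mem_nhds ht.1 (ht.2.trans_le hx.2))
  have hint : IntervalIntegrable (derivWithin h (Icc a b)) volume a x :=
    ((hh.continuousOn_derivWithin (uniqueDiffOn_Icc (hx.1.trans_le hx.2)) le_rfl).mono
      hsub).intervalIntegrable_of_Icc hx.1.le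
  rw [rlIntegralAtom, rlIntegral_one, intervalIntegral.integral_eq_sub_of_hasDerivAt_of_le hx.1.le
    (hh.continuousOn.mono hsub) hderiv hint, rlKernel_of_pos (sub_pos.2 hx.1)]
  simp

lemma rlIntegral_eq_rlIntegralAtom_add_one (hα : 0 < α) (hh : ContDiffOn ℝ 1 h (Icc a b))
    (hx : x ∈ Ioc a b) :
    rlIntegral a α h x = rlIntegralAtom a (α + 1) (h a) (derivWithin h (Icc a b)) x := by
  rw [← rlIntegral_rlIntegralAtom hα one_pos hx.1.le
    (intervalIntegrable_rpow_sub_smul_derivWithin (by positivity) hh hx)]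
  exact rlIntegral_congr hx.1.le fun t ht =>
    (rlIntegralAtom_one_derivWithin hh ⟨ht.1, ht.2.le.trans hx.2⟩).symm

lemma hasDerivAt_rlIntegral_of_contDiffOn (hα : 0 < α) (hh : ContDiffOn ℝ 1 h (Icc a b))
    (hx : x ∈ Ioo a b) :
    HasDerivAt (rlIntegral a α h)
      (rlIntegralAtom a α (h a) (derivWithin h (Icc a b)) x) x := by
  have hcont := hh.continuousOn_derivWithin (uniqueDiffOn_Icc (hx.1.trans hx.2)) le_rfl
  refine (hasDerivAt_rlIntegralAtom_add_one hα hcont hx).congr_of_eventuallyEq ?_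
  filter_upwards [Ioo_mem_nhds hx.1 hx.2] with y hy
  exact rlIntegral_eq_rlIntegralAtom_add_one hα hh (Ioo_subset_Ioc_self hy)

lemma rlIntegral_rlIntegralAtom_derivWithin (hα : 0 < α) (hβ : 0 < β) (hαβ : α + β = 1)
    (hh : ContDiffOn ℝ 1 h (Icc a b)) (hx : x ∈ Ioc a b) :
    rlIntegral a α (rlIntegralAtom a β (h a) (derivWithin h (Icc a b))) x = h x := by
  rw [rlIntegral_rlIntegralAtom hα hβ hx.1.le
    (intervalIntegrable_rpow_sub_smul_derivWithin (by positivity) hh hx), hαβ,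
    rlIntegralAtom_one_derivWithin hh hx]

end ContDiff

theorem caputo_bvp_solution_representation_general [CompleteSpace E] {a b s : ℝ} (hab : a < b)
    (hs1 : 1 < s) (hs2 : s < 2) {h : ℝ → E} (hC1 : ContDiffOn ℝ 1 h (Icc a b)) {u : ℝ → E}
    (hu : ∀ x ∈ Icc a b,
      u x = ((x - a) / (b - a)) • rlIntegral a s h b - rlIntegral a s h x) :
    u a = 0 ∧ u b = 0 ∧
    ∃ u' u'' : ℝ → E,
      (∀ x ∈ Ioo a b, HasDerivAt u (u' x) x) ∧
      (∀ x ∈ Ioo a b, HasDerivAt u' (u'' x) x) ∧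
      (∀ x ∈ Ioo a b, IntervalIntegrable (fun t => (x - t) ^ (1 - s) • u'' t) volume a x) ∧
      (∀ x ∈ Ioo a b, rlIntegral a (2 - s) u'' x = -h x) := by
  have hs : 0 < s - 1 := by linarith
  have h2s : 0 < 2 - s := by linarith
  refine ⟨by simp [hu a (left_mem_Icc.2 hab.le), rlIntegral_self],
    by simp [hu b (right_mem_Icc.2 hab.le), (sub_pos.2 hab).ne'],
    fun x => (b - a)⁻¹ • rlIntegral a s h b - rlIntegral a (s - 1) h x,
    fun x => -rlIntegralAtom a (s - 1) (h a) (derivWithin h (Icc a b)) x,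
    fun x hx => ?_, fun x hx => ?_, fun x hx => ?_, fun x hx => ?_⟩
  · have hlin : HasDerivAt (fun y => (y - a) / (b - a)) (b - a)⁻¹ x := by
      simpa using ((hasDerivAt_id x).sub_const a).div_const (b - a)
    have hint := hasDerivAt_rlIntegral_add_one hs hC1.continuousOn hx
    rw [sub_add_cancel] at hint
    refine ((hlin.smul_const _).sub hint).congr_of_eventuallyEq ?_
    filter_upwards [Ioo_mem_nhds hx.1 hx.2] with y hy using hu y (Ioo_subset_Icc_self hy)
  · exact (hasDerivAt_rlIntegral_of_contDiffOn hs hC1 hx).const_sub _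
  · simp only [smul_neg]
    rw [show 1 - s = 2 - s - 1 by ring]
    exact (intervalIntegrable_rpow_sub_smul_rlIntegralAtom h2s hs hx.1.le
      (intervalIntegrable_rpow_sub_smul_derivWithin (by linarith) hC1
        (Ioo_subset_Ioc_self hx))).neg
  · rw [rlIntegral_neg, rlIntegral_rlIntegralAtom_derivWithin h2s hs (by ring) hC1
      (Ioo_subset_Ioc_self hx)]

/-- Solution representation for the Caputo two-point boundary value problem:
for `1 < s < 2`, `h` continuously differentiable on `[0,1]`,
`c = (1/Γ(s)) ∫₀¹ (1-t)^{s-1} h t dt` and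
`u x = c x - (1/Γ(s)) ∫₀ˣ (x-t)^{s-1} h t dt`, one has `u 0 = u 1 = 0`, `u` is twice
differentiable on `(0,1)`, its second derivative `u''` is integrable against the
kernel `(x-t)^{1-s}`, and `(1/Γ(2-s)) ∫₀ˣ (x-t)^{1-s} u'' t dt = -h x` on `(0,1)`;
i.e. the Caputo derivative of order `s` of `u` equals `-h`. -/
theorem caputo_bvp_solution_representation (s : ℝ) (hs1 : 1 < s) (hs2 : s < 2)
    (h : ℝ → ℝ) (hC1 : ContDiffOn ℝ 1 h (Set.Icc 0 1))
    (c : ℝ) (hcdef : c = (1 / Real.Gamma s) * ∫ t in (0:ℝ)..1, (1 - t) ^ (s - 1) * h t)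
    (u : ℝ → ℝ)
    (hu : ∀ x, u x = c * x
      - (1 / Real.Gamma s) * ∫ t in (0:ℝ)..x, (x - t) ^ (s - 1) * h t) :
    u 0 = 0 ∧ u 1 = 0 ∧
    ∃ u' u'' : ℝ → ℝ,
      (∀ x ∈ Set.Ioo (0:ℝ) 1, HasDerivAt u (u' x) x) ∧
      (∀ x ∈ Set.Ioo (0:ℝ) 1, HasDerivAt u' (u'' x) x) ∧
      (∀ x ∈ Set.Ioo (0:ℝ) 1,
        IntervalIntegrable (fun t => (x - t) ^ (1 - s) * u'' t) MeasureTheory.volume 0 x) ∧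
      (∀ x ∈ Set.Ioo (0:ℝ) 1,
        (1 / Real.Gamma (2 - s)) * ∫ t in (0:ℝ)..x, (x - t) ^ (1 - s) * u'' t = -h x) := by
  simpa [rlIntegral, show 2 - s - 1 = 1 - s by ring] using
    caputo_bvp_solution_representation_general zero_lt_one hs1 hs2 hC1 (u := u) fun x _ => by
      simp [hu, hcdef, rlIntegral, mul_comm x]
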